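/- Let A ⊆ B be an aperiodic C*-inclusion with a supportive generalised expectation E : B → Ã ⊇ A, and set N_E := {b ∈ B : E((b c)*(b c)) = 0 for all c ∈ B}. Then: (1) N_E is the hidden ideal of the inclusion A ⊆ B, i.e., N_E is a closed two-sided ideal of B and every closed two-sided ideal J of B satisfies J ∩ A = {0} if and only if J ⊆ N_E; (2) B is simple if and only if N_E = {0} and A is B-minimal. -/

import Mathlib

/-- A square matrix over a C*-algebra is positive iff it is of the form `yᴴ * y`. -/
def MatrixIsPositive {B : Type*} [NonUnitalCStarAlgebra B] {n : ℕ}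
    (M : Matrix (Fin n) (Fin n) B) : Prop :=
  ∃ y : Matrix (Fin n) (Fin n) B, M = y.conjTranspose * y

/-- A linear map between C*-algebras is completely positive if all the induced entrywise
maps between matrix algebras preserve positivity. -/
def CompletelyPositive {B C : Type*} [NonUnitalCStarAlgebra B] [NonUnitalCStarAlgebra C]
    (E : B →ₗ[ℂ] C) : Prop :=
  ∀ (n : ℕ) (M : Matrix (Fin n) (Fin n) B),
    MatrixIsPositive M → MatrixIsPositive (M.map ⇑E)

/-- A closed (ring-theoretic) two-sided ideal of `R`. -/
def IsClosedTwoSidedIdeal {R : Type*} [NonUnitalCStarAlgebra R] (S : Set R) : Prop :=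
  IsClosed S ∧ (0 : R) ∈ S ∧ (∀ x ∈ S, ∀ y ∈ S, x + y ∈ S) ∧ (∀ x ∈ S, -x ∈ S) ∧
    (∀ r : R, ∀ x ∈ S, r * x ∈ S) ∧ ∀ r : R, ∀ x ∈ S, x * r ∈ S

/-- A hereditary C*-subalgebra of `A`: a nonzero closed *-subalgebra `D` such that
`a ∈ D`, `0 ≤ b ≤ a` imply `b ∈ D`. -/
def IsHereditarySubalgebra {A : Type*} [NonUnitalCStarAlgebra A] [PartialOrder A]
    [StarOrderedRing A] (D : Set A) : Prop :=
  IsClosed D ∧ (∃ x ∈ D, x ≠ 0) ∧ (0 : A) ∈ D ∧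
    (∀ x ∈ D, ∀ y ∈ D, x + y ∈ D) ∧ (∀ (c : ℂ), ∀ x ∈ D, c • x ∈ D) ∧
    (∀ x ∈ D, ∀ y ∈ D, x * y ∈ D) ∧ (∀ x ∈ D, star x ∈ D) ∧
    ∀ a ∈ D, ∀ b : A, 0 ≤ b → b ≤ a → b ∈ D

open Filter Topology

section Ideals

variable {R : Type*} [NonUnitalCStarAlgebra R]

theorem IsClosedTwoSidedIdeal.isClosed {S : Set R} (h : IsClosedTwoSidedIdeal S) : IsClosed S :=
  h.1

theorem IsClosedTwoSidedIdeal.zero_mem {S : Set R} (h : IsClosedTwoSidedIdeal S) : (0 : R) ∈ S :=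
  h.2.1

theorem IsClosedTwoSidedIdeal.add_mem {S : Set R} (h : IsClosedTwoSidedIdeal S) {x y : R}
    (hx : x ∈ S) (hy : y ∈ S) : x + y ∈ S :=
  h.2.2.1 x hx y hy

theorem IsClosedTwoSidedIdeal.neg_mem {S : Set R} (h : IsClosedTwoSidedIdeal S) {x : R}
    (hx : x ∈ S) : -x ∈ S :=
  h.2.2.2.1 x hx

theorem IsClosedTwoSidedIdeal.mul_mem_left {S : Set R} (h : IsClosedTwoSidedIdeal S) (r : R) {x : R}
    (hx : x ∈ S) : r * x ∈ S :=
  h.2.2.2.2.1 r x hx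

theorem IsClosedTwoSidedIdeal.mul_mem_right {S : Set R} (h : IsClosedTwoSidedIdeal S) (r : R)
    {x : R} (hx : x ∈ S) : x * r ∈ S :=
  h.2.2.2.2.2 r x hx

theorem IsClosedTwoSidedIdeal.sub_mem {S : Set R} (h : IsClosedTwoSidedIdeal S) {x y : R}
    (hx : x ∈ S) (hy : y ∈ S) : x - y ∈ S := by
  rw [sub_eq_add_neg]
  exact h.add_mem hx (h.neg_mem hy)

/-- Closed ideals of a possibly non-unital C*-algebra are complex subspaces. -/
theorem IsClosedTwoSidedIdeal.smul_mem [PartialOrder R] [StarOrderedRing R]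
    {S : Set R} (h : IsClosedTwoSidedIdeal S) (c : ℂ) {x : R} (hx : x ∈ S) : c • x ∈ S := by
  have hlim : Tendsto (fun e : R => (c • e) * x) (CStarAlgebra.approximateUnit R) (𝓝 (c • x)) := by
    simp only [smul_mul_assoc]
    exact ((CStarAlgebra.increasingApproximateUnit R).tendsto_mul_right x).const_smul c
  exact h.isClosed.mem_of_tendsto hlim (Eventually.of_forall fun e => h.mul_mem_left _ hx)

/-- A closed ideal is the underlying set of a complex subspace. -/
def IsClosedTwoSidedIdeal.toSubmodule [PartialOrder R] [StarOrderedRing R]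
    {S : Set R} (h : IsClosedTwoSidedIdeal S) : Submodule ℂ R where
  carrier := S
  add_mem' := h.add_mem
  zero_mem' := h.zero_mem
  smul_mem' c _ hx := h.smul_mem c hx

/-- For self-adjoint `j` and `s > 0`, some `u` in the ideal generated by `j` satisfies
`‖(1 - u) j (1 - u)‖ ≤ s`. -/
theorem exists_isSelfAdjoint_mul_norm_le {j : R} (hj : IsSelfAdjoint j) {s : ℝ} (hs : 0 < s) :
    ∃ v : R, IsSelfAdjoint (j * v) ∧
      ‖j - j * (j * v) - (j * v) * j + (j * v) * j * (j * v)‖ ≤ s := by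
  have hpos (t : ℝ) : t ^ 2 + s ^ 2 ≠ 0 := by positivity
  have hc : Continuous fun t : ℝ => t / (t ^ 2 + s ^ 2) := by fun_prop (disch := exact hpos _)
  have hu : j * cfcₙ (fun t : ℝ => t / (t ^ 2 + s ^ 2)) j =
      cfcₙ (fun t : ℝ => t * (t / (t ^ 2 + s ^ 2))) j := by
    nth_rewrite 1 [← cfcₙ_id' ℝ j]
    rw [cfcₙ_mul _ _ j (by fun_prop) (by simp) hc.continuousOn (by simp)]
  refine ⟨cfcₙ (fun t : ℝ => t / (t ^ 2 + s ^ 2)) j, ?_, ?_⟩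
  · rw [hu]
    exact cfcₙ_predicate _ _
  · rw [hu]
    set g : ℝ → ℝ := fun t => t * (t / (t ^ 2 + s ^ 2)) with hg
    have hgc : Continuous g := by fun_prop
    have h1 : j * cfcₙ g j = cfcₙ (fun t => t * g t) j := by
      nth_rewrite 1 [← cfcₙ_id' ℝ j]
      rw [cfcₙ_mul _ _ j (by fun_prop) (by simp) hgc.continuousOn (by simp [g])]
    have h2 : cfcₙ g j * j = cfcₙ (fun t => g t * t) j := by
      nth_rewrite 2 [← cfcₙ_id' ℝ j]
      rw [cfcₙ_mul _ _ j hgc.continuousOn (by simp [g]) (by fun_prop) (by simp)]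
    have h3 : cfcₙ (fun t => g t * t) j * cfcₙ g j = cfcₙ (fun t => g t * t * g t) j := by
      rw [cfcₙ_mul _ _ j (by fun_prop) (by simp) hgc.continuousOn (by simp [g])]
    have h4 : j - cfcₙ (fun t => t * g t) j - cfcₙ (fun t => g t * t) j +
        cfcₙ (fun t => g t * t * g t) j =
        cfcₙ (fun t => t - t * g t - g t * t + g t * t * g t) j := by
      nth_rewrite 1 [← cfcₙ_id' ℝ j]
      rw [cfcₙ_add (a := j) _ _ (by fun_prop) (by simp) (by fun_prop) (by simp),
        cfcₙ_sub (a := j) _ _ (by fun_prop) (by simp) (by fun_prop) (by simp),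
        cfcₙ_sub (a := j) _ _ (by fun_prop) (by simp) (by fun_prop) (by simp)]
    rw [h1, h2, h3, h4]
    refine norm_cfcₙ_le fun t _ => ?_
    have heq : t - t * g t - g t * t + g t * t * g t = t * (s ^ 2 / (t ^ 2 + s ^ 2)) ^ 2 := by
      simp only [hg]
      have := hpos t
      field_simp
      ring
    have hq0 : 0 ≤ s ^ 2 / (t ^ 2 + s ^ 2) := by positivity
    have hq1 : s ^ 2 / (t ^ 2 + s ^ 2) ≤ 1 := by
      rw [div_le_one (by positivity)]
      nlinarith [sq_nonneg t]
    have hq2 : |t| * (s ^ 2 / (t ^ 2 + s ^ 2)) ≤ s := by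
      rw [← mul_div_assoc, div_le_iff₀ (by positivity), ← sq_abs t]
      nlinarith [mul_nonneg hs.le (sq_nonneg (|t| - s)), mul_nonneg hs.le (sq_nonneg (|t|)),
        pow_pos hs 3, mul_nonneg (mul_nonneg hs.le hs.le) (abs_nonneg t)]
    rw [heq, Real.norm_eq_abs, abs_mul, abs_of_nonneg (sq_nonneg (s ^ 2 / (t ^ 2 + s ^ 2)))]
    nlinarith [mul_nonneg (abs_nonneg t) hq0]

/-- Closed ideals are hereditary. -/
theorem IsClosedTwoSidedIdeal.mem_of_nonneg_of_le [PartialOrder R] [StarOrderedRing R]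
    {S : Set R} (h : IsClosedTwoSidedIdeal S) {a j : R} (ha : 0 ≤ a) (haj : a ≤ j) (hj : j ∈ S) :
    a ∈ S := by
  obtain ⟨b, rfl⟩ := CStarAlgebra.nonneg_iff_eq_star_mul_self.mp ha
  obtain ⟨d, hd⟩ := CStarAlgebra.nonneg_iff_eq_star_mul_self.mp (sub_nonneg.mpr haj)
  refine h.mul_mem_left _ ?_
  rw [← h.isClosed.closure_eq, Metric.mem_closure_iff]
  intro ε hε
  obtain ⟨v, hv, hle⟩ := exists_isSelfAdjoint_mul_norm_le (IsSelfAdjoint.of_nonneg (ha.trans haj))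
    (show 0 < ε ^ 2 / 4 by positivity)
  refine ⟨b * (j * v), h.mul_mem_left _ (h.mul_mem_right _ hj), ?_⟩
  generalize j * v = u at hv hle
  have key : star (b - b * u) * (b - b * u) ≤ j - j * u - u * j + u * j * u := by
    rw [← sub_nonneg]
    convert star_mul_self_nonneg (d - d * u) using 1
    have hj' : j = star b * b + star d * d := by rw [← hd]; abel
    simp only [star_sub, star_mul, hv.star_eq, hj']
    noncomm_ring
  have hn := (CStarAlgebra.norm_le_norm_of_nonneg_of_le (star_mul_self_nonneg _) key).trans hle
  rw [CStarRing.norm_star_mul_self] at hn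
  rw [dist_eq_norm]
  nlinarith [norm_nonneg (b - b * u)]

end Ideals

section Quotient

variable {A B : Type*} [NonUnitalCStarAlgebra A] [PartialOrder A] [StarOrderedRing A]
  [NonUnitalCStarAlgebra B] [PartialOrder B] [StarOrderedRing B]

/-- If a closed ideal meets the image of `A` trivially, then a positive element of `A` at distance
at most `r` from a self-adjoint element of the ideal has norm at most `r`. -/
theorem norm_le_of_nonneg_of_norm_sub_le {ι : A →⋆ₙₐ[ℂ] B} (hι : Isometry ι) {J : Set B}
    (hJ : IsClosedTwoSidedIdeal J) (hJA : J ∩ Set.range ι = {0}) {z : A} (hz : 0 ≤ z) {j : B}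
    (hj : j ∈ J) (hjs : IsSelfAdjoint j) {r : ℝ} (hr : 0 ≤ r) (h : ‖ι z - j‖ ≤ r) : ‖z‖ ≤ r := by
  have hzs : IsSelfAdjoint z := .of_nonneg hz
  set p : ℝ → ℝ := fun t => max (t - r) 0 with hp
  have hpc : Continuous p := by fun_prop
  have hp0 : p 0 = 0 := by simpa [hp] using hr
  set f : A := cfcₙ p z with hf
  have hfn : 0 ≤ f := cfcₙ_nonneg fun t _ => le_max_right _ _
  have hfs : IsSelfAdjoint f := .of_nonneg hfn
  have hcube : f * z * f - r • (f * f) = f * f * f := by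
    have h1 : f * z * f = cfcₙ (fun t => p t * t * p t) z := by
      rw [cfcₙ_mul (fun t => p t * t) p z (by fun_prop) (by simp) (by fun_prop) hp0,
        cfcₙ_mul p (fun t => t) z (by fun_prop) hp0 (by fun_prop) (by simp), cfcₙ_id' ℝ z]
    have h2 : f * f = cfcₙ (fun t => p t * p t) z := by
      rw [cfcₙ_mul p p z (by fun_prop) hp0 (by fun_prop) hp0]
    have h3 : f * f * f = cfcₙ (fun t => p t * p t * p t) z := by
      rw [cfcₙ_mul (fun t => p t * p t) p z (by fun_prop) (by simp [hp0]) (by fun_prop) hp0, ← h2]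
    rw [h3, h1, h2, ← cfcₙ_smul r (fun t => p t * p t) z (by fun_prop) (by simp [hp0]),
      ← cfcₙ_sub (a := z) _ _ (by fun_prop) (by simp) (by fun_prop) (by simp [hp0])]
    refine cfcₙ_congr fun t _ => ?_
    rcases le_total t r with ht | ht
    · simp [hp, max_eq_right (sub_nonpos.mpr ht)]
    · simp only [hp, max_eq_left (sub_nonneg.mpr ht), smul_eq_mul]
      ring
  have hfB : IsSelfAdjoint (ι f) := hfs.map ι
  have hle : ι (f * f * f) ≤ ι f * j * ι f := by
    have hsa : IsSelfAdjoint (ι z - j) := (hzs.map ι).sub hjs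
    have h1 := CStarAlgebra.star_left_conjugate_le_norm_smul (a := ι f) hsa
    have h2 : ‖ι z - j‖ • (star (ι f) * ι f) ≤ r • (star (ι f) * ι f) :=
      smul_le_smul_of_nonneg_right h (star_mul_self_nonneg _)
    have h3 := h1.trans h2
    rw [hfB.star_eq, ← sub_nonneg] at h3
    have hι_smul : ι (r • (f * f)) = r • (ι f * ι f) := by
      rw [← Complex.coe_smul, map_smul, map_mul, Complex.coe_smul]
    rw [← hcube, map_sub, hι_smul, map_mul, map_mul, ← sub_nonneg]
    convert h3 using 1
    noncomm_ring
  have hfff : 0 ≤ f * f * f := by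
    simpa [hfs.star_eq] using star_left_conjugate_nonneg hfn f
  have hmem : ι (f * f * f) ∈ J :=
    hJ.mem_of_nonneg_of_le (map_nonneg ι hfff) hle (hJ.mul_mem_right _ (hJ.mul_mem_left _ hj))
  have hcube0 : f * f * f = 0 := by
    have : ι (f * f * f) ∈ ({0} : Set B) := hJA ▸ ⟨hmem, Set.mem_range_self _⟩
    exact hι.injective (by simpa using this)
  have hfzero : f = 0 := by
    have h4 : star (f * f) * (f * f) = 0 := by
      rw [star_mul, hfs.star_eq, ← mul_assoc, hcube0, zero_mul]
    have h5 : star f * f = 0 := by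
      rw [hfs.star_eq]; exact CStarRing.star_mul_self_eq_zero_iff _ |>.mp h4
    exact CStarRing.star_mul_self_eq_zero_iff _ |>.mp h5
  have hspec : ∀ t ∈ quasispectrum ℝ z, t ≤ r := by
    intro t ht
    have := norm_apply_le_norm_cfcₙ p z ht hpc.continuousOn hp0 hzs
    rw [← hf, hfzero, norm_zero, norm_le_zero_iff] at this
    linarith [le_max_left (t - r) 0]
  rw [← cfcₙ_id' ℝ z]
  refine norm_cfcₙ_le fun t ht => ?_
  rw [Real.norm_eq_abs, abs_of_nonneg (quasispectrum_nonneg_of_nonneg z hz t ht)]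
  exact hspec t ht

/-- If a closed ideal meets the image of `A` trivially, then the quotient map is isometric on `A`,
tested on self-adjoint elements of the ideal. -/
theorem norm_le_norm_sub_of_inter_range_eq_zero {ι : A →⋆ₙₐ[ℂ] B} (hι : Isometry ι) {J : Set B}
    (hJ : IsClosedTwoSidedIdeal J) (hJA : J ∩ Set.range ι = {0}) (y : A) {j : B}
    (hj : j ∈ J) (hjs : IsSelfAdjoint j) : ‖y‖ ≤ ‖j - ι y‖ := by
  set k : B := star (ι y) * j + j * ι y - j * j with hk
  have hkJ : k ∈ J :=
    hJ.sub_mem (hJ.add_mem (hJ.mul_mem_left _ hj) (hJ.mul_mem_right _ hj)) (hJ.mul_mem_left _ hj)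
  have hks : IsSelfAdjoint k := by
    simp only [hk, IsSelfAdjoint, star_sub, star_add, star_mul, star_star, hjs.star_eq]
    abel
  have hsq : ι (star y * y) - k = star (j - ι y) * (j - ι y) := by
    simp only [hk, map_mul, map_star, star_sub, hjs.star_eq]
    noncomm_ring
  have hmain := norm_le_of_nonneg_of_norm_sub_le hι hJ hJA (star_mul_self_nonneg y) hkJ hks
    (mul_self_nonneg ‖j - ι y‖) (by rw [hsq, CStarRing.norm_star_mul_self])
  rw [CStarRing.norm_star_mul_self] at hmain
  exact abs_le_of_sq_le_sq' (by nlinarith) (norm_nonneg _) |>.2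

end Quotient

section CompletelyPositive

variable {B C : Type*} [NonUnitalCStarAlgebra B] [NonUnitalCStarAlgebra C]

theorem CompletelyPositive.exists_map_star_mul_self {E : B →ₗ[ℂ] C} (hE : CompletelyPositive E)
    (b : B) : ∃ y : C, E (star b * b) = star y * y := by
  obtain ⟨y, hy⟩ := hE 1 (Matrix.of fun _ _ => star b * b)
    ⟨Matrix.of fun _ _ => b, by ext i k; simp [Matrix.mul_apply]⟩
  refine ⟨y 0 0, ?_⟩
  simpa [Matrix.mul_apply] using congrFun (congrFun hy 0) 0

variable [PartialOrder C] [StarOrderedRing C]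

theorem CompletelyPositive.map_nonneg [PartialOrder B] [StarOrderedRing B] {E : B →ₗ[ℂ] C}
    (hE : CompletelyPositive E) {b : B} (hb : 0 ≤ b) : 0 ≤ E b := by
  obtain ⟨c, rfl⟩ := CStarAlgebra.nonneg_iff_eq_star_mul_self.mp hb
  obtain ⟨y, hy⟩ := hE.exists_map_star_mul_self c
  exact hy ▸ star_mul_self_nonneg y

theorem CompletelyPositive.map_eq_zero_of_le [PartialOrder B] [StarOrderedRing B] {E : B →ₗ[ℂ] C}
    (hE : CompletelyPositive E) {a b : B} (ha : 0 ≤ a) (hab : a ≤ b) (hb : E b = 0) : E a = 0 := by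
  refine le_antisymm ?_ (hE.map_nonneg ha)
  have := hE.map_nonneg (sub_nonneg.mpr hab)
  rwa [map_sub, hb, zero_sub, neg_nonneg] at this

/-- The Kadison–Schwarz inequality, cut down by a self-adjoint contraction. -/
theorem CompletelyPositive.star_map_mul_map_le_of_norm_le_one {E : B →ₗ[ℂ] C}
    (hE : CompletelyPositive E) (hcontr : ∀ b, ‖E b‖ ≤ ‖b‖) (x : B) {e : B}
    (he : IsSelfAdjoint e) (he1 : ‖e‖ ≤ 1) :
    star (E (e * x)) * E (e * x) ≤ E (star x * x) := by
  obtain ⟨y, hy⟩ := hE 2 !![star e * e, star e * x; star x * e, star x * x]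
    ⟨!![e, x; 0, 0], by
      ext i k
      fin_cases i <;> fin_cases k <;> simp [Matrix.mul_apply, Fin.sum_univ_two]⟩
  have h00 : E (e * e) = star (y 0 0) * y 0 0 + star (y 1 0) * y 1 0 := by
    simpa [Matrix.mul_apply, Fin.sum_univ_two, he.star_eq] using congrFun (congrFun hy 0) 0
  have h01 : E (e * x) = star (y 0 0) * y 0 1 + star (y 1 0) * y 1 1 := by
    simpa [Matrix.mul_apply, Fin.sum_univ_two, he.star_eq] using congrFun (congrFun hy 0) 1
  have h11 : E (star x * x) = star (y 0 1) * y 0 1 + star (y 1 1) * y 1 1 := by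
    simpa [Matrix.mul_apply, Fin.sum_univ_two] using congrFun (congrFun hy 1) 1
  set q := E (e * x) with hq
  have hq' : star q = star (y 0 1) * y 0 0 + star (y 1 1) * y 1 0 := by
    simp [h01]
  have hpn : ‖E (e * e)‖ ≤ 1 :=
    (hcontr _).trans ((norm_mul_le _ _).trans (mul_le_one₀ he1 (norm_nonneg _) he1))
  have hpsa : IsSelfAdjoint (E (e * e)) := by
    rw [h00]
    exact (IsSelfAdjoint.star_mul_self _).add (.star_mul_self _)
  have h1 : star q * E (e * e) * q ≤ star q * q := by
    refine (CStarAlgebra.star_left_conjugate_le_norm_smul hpsa).trans ?_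
    simpa using smul_le_smul_of_nonneg_right hpn (star_mul_self_nonneg q)
  have h2 : 0 ≤ E (star x * x) - star q * q - star q * q + star q * E (e * e) * q := by
    have := add_nonneg (star_mul_self_nonneg (y 0 1 - y 0 0 * q))
      (star_mul_self_nonneg (y 1 1 - y 1 0 * q))
    convert this using 1
    have e1 : star q * q = star q * (star (y 0 0) * y 0 1 + star (y 1 0) * y 1 1) := by
      rw [← h01]
    have e2 : star q * q = (star (y 0 1) * y 0 0 + star (y 1 1) * y 1 0) * q := by rw [← hq']
    nth_rewrite 1 [e1]
    rw [e2, h11, h00]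
    simp only [star_sub, star_mul]
    noncomm_ring
  have h3 : 0 ≤ (E (star x * x) - star q * q) - (star q * q - star q * E (e * e) * q) := by
    convert h2 using 1
    abel
  exact sub_nonneg.mp ((sub_nonneg.mpr h1).trans (sub_nonneg.mp h3))

theorem eq_zero_of_forall_real_smul_add_nonneg {u v : C}
    (h : ∀ t : ℝ, 0 ≤ t • u + (t * t) • v) : u = 0 := by
  have key (w : C) (hw : ∀ t : ℝ, 0 ≤ t • w + (t * t) • v) : 0 ≤ w := by
    have hlim : Tendsto (fun t : ℝ => w + t • v) (𝓝[>] 0) (𝓝 w) := by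
      have hc : Continuous fun t : ℝ => w + t • v := by fun_prop
      simpa using (hc.tendsto 0).mono_left nhdsWithin_le_nhds
    refine ge_of_tendsto hlim ?_
    filter_upwards [self_mem_nhdsWithin] with t ht
    have ht : 0 < t := ht
    have := smul_nonneg (inv_nonneg.mpr ht.le) (hw t)
    rwa [smul_add, smul_smul, smul_smul, inv_mul_cancel₀ ht.ne', ← mul_assoc,
      inv_mul_cancel₀ ht.ne', one_mul, one_smul] at this
  refine le_antisymm (neg_nonneg.mp (key (-u) fun t => ?_)) (key u h)
  simpa using h (-t)

variable [PartialOrder B] [StarOrderedRing B]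

/-- The Kadison–Schwarz inequality for completely positive contractions. -/
theorem CompletelyPositive.star_map_mul_map_le {E : B →ₗ[ℂ] C} (hE : CompletelyPositive E)
    (hcontr : ∀ b, ‖E b‖ ≤ ‖b‖) (x : B) : star (E x) * E x ≤ E (star x * x) := by
  have hcont : Continuous E :=
    (E.mkContinuous 1 fun b => by simpa using hcontr b).continuous
  have hu := CStarAlgebra.increasingApproximateUnit B
  have hlim : Tendsto (fun e : B => E (e * x)) (CStarAlgebra.approximateUnit B) (𝓝 (E x)) :=
    (hcont.tendsto x).comp (hu.tendsto_mul_right x)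
  refine le_of_tendsto (hlim.star.mul hlim) ?_
  filter_upwards [hu.eventually_isSelfAdjoint, hu.eventually_norm] with e he he1
  exact hE.star_map_mul_map_le_of_norm_le_one hcontr x he he1

/-- Elements on which a completely positive contraction is multiplicative, in the sense that
`E (a* a) = E (a)* E (a)`, lie in its multiplicative domain. -/
theorem CompletelyPositive.map_star_mul {E : B →ₗ[ℂ] C} (hE : CompletelyPositive E)
    (hcontr : ∀ b, ‖E b‖ ≤ ‖b‖) {a : B} (ha : E (star a * a) = star (E a) * E a) (b : B) :
    E (star a * b) = star (E a) * E b ∧ E (star b * a) = star (E b) * E a := by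
  have key (b : B) : E (star a * b) - star (E a) * E b + (E (star b * a) - star (E b) * E a) = 0 := by
    refine eq_zero_of_forall_real_smul_add_nonneg (v := E (star b * b) - star (E b) * E b)
      fun t => ?_
    have h := sub_nonneg.mpr (hE.star_map_mul_map_le hcontr (a + (t : ℂ) • b))
    convert h using 1
    simp only [star_add, star_smul, add_mul, mul_add, map_add, map_smul, smul_mul_assoc,
      mul_smul_comm, ha, smul_smul, RCLike.star_def, Complex.conj_ofReal, ← Complex.coe_smul,
      smul_sub, smul_add, Complex.ofReal_mul]
    abel
  have h1 := key b
  have h2 := key (Complex.I • b)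
  simp only [star_smul, map_smul, smul_mul_assoc, mul_smul_comm, RCLike.star_def,
    Complex.conj_I, ← smul_sub] at h2
  rw [neg_smul, ← sub_eq_add_neg, ← smul_sub,
    smul_eq_zero_iff_right Complex.I_ne_zero, sub_eq_zero] at h2
  rw [h2, ← two_smul ℂ, smul_eq_zero_iff_right two_ne_zero, sub_eq_zero] at h1
  exact ⟨sub_eq_zero.mp (h2.trans (sub_eq_zero.mpr h1)), h1⟩

end CompletelyPositive

section HiddenIdeal

variable {A B C : Type*} [NonUnitalCStarAlgebra A] [NonUnitalCStarAlgebra B] [PartialOrder B]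
  [StarOrderedRing B] [NonUnitalCStarAlgebra C] [PartialOrder C] [StarOrderedRing C]

/-- The set `N_E` is a closed two-sided ideal. -/
theorem CompletelyPositive.isClosedTwoSidedIdeal_null {E : B →ₗ[ℂ] C} (hE : CompletelyPositive E)
    (hcontr : ∀ b, ‖E b‖ ≤ ‖b‖) :
    IsClosedTwoSidedIdeal {b : B | ∀ c : B, E (star (b * c) * (b * c)) = 0} := by
  have hcont : Continuous E :=
    (E.mkContinuous 1 fun b => by simpa using hcontr b).continuous
  refine ⟨?_, by simp, fun x hx y hy c => ?_, fun x hx c => by simpa using hx c,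
    fun r x hx c => ?_, fun r x hx c => by simpa only [mul_assoc] using hx (r * c)⟩
  · rw [Set.ofPred_forall]
    exact isClosed_iInter fun c => isClosed_eq (by fun_prop) continuous_const
  · refine hE.map_eq_zero_of_le (star_mul_self_nonneg _)
      (b := (2 : ℂ) • (star (x * c) * (x * c)) + (2 : ℂ) • (star (y * c) * (y * c))) ?_
      (by rw [map_add, map_smul, map_smul, hx c, hy c, smul_zero, add_zero])
    rw [← sub_nonneg]
    convert star_mul_self_nonneg ((x - y) * c) using 1
    simp only [two_smul, add_mul, sub_mul, star_add, star_sub]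
    noncomm_ring
  · refine hE.map_eq_zero_of_le (star_mul_self_nonneg _)
      (b := (‖star r * r‖ : ℂ) • (star (x * c) * (x * c))) ?_
      (by rw [map_smul, hx c, smul_zero])
    rw [Complex.coe_smul]
    convert CStarAlgebra.star_left_conjugate_le_norm_smul (a := x * c)
      (IsSelfAdjoint.star_mul_self r) using 1
    simp only [star_mul, mul_assoc]

/-- The bimodule property of generalised expectations, for compressions of positive elements. -/
theorem CompletelyPositive.map_conjugate {E : B →ₗ[ℂ] C} (hE : CompletelyPositive E)
    (hcontr : ∀ b, ‖E b‖ ≤ ‖b‖) {ι : A →⋆ₙₐ[ℂ] B} {κ : A →⋆ₙₐ[ℂ] C}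
    (hres : ∀ a, E (ι a) = κ a) {a : A} (ha : IsSelfAdjoint a) {x : B} (hx : 0 ≤ x) :
    E (ι a * x * ι a) = κ a * E x * κ a := by
  have hmul : E (star (ι a) * ι a) = star (E (ι a)) * E (ι a) := by
    rw [← map_star, ← map_mul, hres, hres, map_mul, map_star]
  have hleft := (hE.map_star_mul hcontr hmul (x * ι a)).1
  have hright := (hE.map_star_mul hcontr hmul x).2
  rw [(ha.map ι).star_eq, hres, (ha.map κ).star_eq] at hleft
  rw [(IsSelfAdjoint.of_nonneg hx).star_eq, hres,
    (IsSelfAdjoint.of_nonneg (hE.map_nonneg hx)).star_eq] at hright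
  rw [mul_assoc, hleft, hright, mul_assoc]

variable [PartialOrder A] [StarOrderedRing A]

/-- For an aperiodic inclusion with a supportive generalised expectation, every closed ideal that
meets `A` trivially is contained in `N_E`. -/
theorem subset_null_of_inter_range_eq_zero {ι : A →⋆ₙₐ[ℂ] B} {κ : A →⋆ₙₐ[ℂ] C} (hι : Isometry ι)
    {E : B →ₗ[ℂ] C} (hE : CompletelyPositive E) (hcontr : ∀ b, ‖E b‖ ≤ ‖b‖)
    (hres : ∀ a, E (ι a) = κ a)
    (hap : ∀ x : B, ∀ D : Set A, IsHereditarySubalgebra D → ∀ ε : ℝ, 0 < ε →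
      ∃ a ∈ D, 0 ≤ a ∧ ‖a‖ = 1 ∧ ∃ y : A, ‖ι a * x * ι a - ι y‖ < ε)
    (hsupp : ∀ b : B, 0 ≤ b → E b ≠ 0 →
      ∃ δ : ℝ, 0 < δ ∧ ∃ D : Set A, IsHereditarySubalgebra D ∧
        ∀ x ∈ D, 0 ≤ x → ‖x‖ = 1 → δ ≤ ‖κ x * E b * κ x‖)
    {J : Set B} (hJ : IsClosedTwoSidedIdeal J) (hJA : J ∩ Set.range ι = {0}) :
    J ⊆ {b : B | ∀ c : B, E (star (b * c) * (b * c)) = 0} := by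
  intro b hb c
  by_contra hne
  have hxn : 0 ≤ star (b * c) * (b * c) := star_mul_self_nonneg _
  have hxJ : star (b * c) * (b * c) ∈ J := hJ.mul_mem_left _ (hJ.mul_mem_right _ hb)
  generalize star (b * c) * (b * c) = x at hne hxn hxJ
  obtain ⟨δ, hδ, D, hD, hDδ⟩ := hsupp x hxn hne
  obtain ⟨a, haD, ha, ha1, y, hy⟩ := hap x D hD (δ / 2) (by positivity)
  have has : IsSelfAdjoint a := .of_nonneg ha
  have hjs : IsSelfAdjoint (ι a * x * ι a) := by
    simpa [(has.map ι).star_eq] using (IsSelfAdjoint.of_nonneg hxn).conjugate (ι a)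
  have hyn := norm_le_norm_sub_of_inter_range_eq_zero hι hJ hJA y
    (hJ.mul_mem_right (ι a) (hJ.mul_mem_left (ι a) hxJ)) hjs
  have hge : δ ≤ ‖ι a * x * ι a‖ := by
    refine (hDδ a haD ha ha1).trans ?_
    rw [← hE.map_conjugate hcontr hres has hxn]
    exact hcontr _
  have hιy : ‖ι y‖ = ‖y‖ := hι.norm_map_of_map_zero (map_zero ι) y
  have htri := norm_le_norm_sub_add (ι a * x * ι a) (ι y)
  linarith

end HiddenIdeal

section Inclusion

variable {A B : Type*} [NonUnitalCStarAlgebra A] [NonUnitalCStarAlgebra B]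

/-- The closed span of `B * I * B` is a closed two-sided ideal. -/
theorem isClosedTwoSidedIdeal_closure_span (ι : A →⋆ₙₐ[ℂ] B) (I : Set A) :
    IsClosedTwoSidedIdeal (closure (Submodule.span ℂ
      {z : B | ∃ b₁ b₂ : B, ∃ i ∈ I, z = b₁ * ι i * b₂} : Set B)) := by
  set M := Submodule.span ℂ {z : B | ∃ b₁ b₂ : B, ∃ i ∈ I, z = b₁ * ι i * b₂} with hM
  rw [← Submodule.topologicalClosure_coe]
  have hmap (f : B →ₗ[ℂ] B) (hf : Continuous f)
      (hgen : ∀ b₁ b₂ : B, ∀ i ∈ I, f (b₁ * ι i * b₂) ∈ M) :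
      ∀ x ∈ M.topologicalClosure, f x ∈ M.topologicalClosure := by
    have hle : M ≤ M.comap f := by
      rw [hM, Submodule.span_le]
      rintro _ ⟨b₁, b₂, i, hi, rfl⟩
      exact hgen b₁ b₂ i hi
    intro x hx
    exact map_mem_closure hf hx fun z hz => hle hz
  refine ⟨M.isClosed_topologicalClosure, zero_mem _, fun x hx y hy => add_mem hx hy,
    fun x hx => neg_mem hx, fun r => hmap (LinearMap.mulLeft ℂ r) (continuous_const_mul r) ?_,
    fun r => hmap (LinearMap.mulRight ℂ r) (continuous_mul_const r) ?_⟩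
  · intro b₁ b₂ i hi
    exact Submodule.subset_span ⟨r * b₁, b₂, i, hi, by simp [mul_assoc]⟩
  · intro b₁ b₂ i hi
    exact Submodule.subset_span ⟨b₁, b₂ * r, i, hi, by simp [mul_assoc]⟩

/-- The preimage of a closed two-sided ideal is a closed two-sided ideal. -/
theorem IsClosedTwoSidedIdeal.preimage {ι : A →⋆ₙₐ[ℂ] B} (hι : Continuous ι) {J : Set B}
    (hJ : IsClosedTwoSidedIdeal J) : IsClosedTwoSidedIdeal (ι ⁻¹' J) := by
  refine ⟨hJ.isClosed.preimage hι, ?_, fun x hx y hy => ?_, fun x hx => ?_, fun r x hx => ?_,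
    fun r x hx => ?_⟩ <;> rw [Set.mem_preimage]
  · simpa using hJ.zero_mem
  · simpa using hJ.add_mem hx hy
  · simpa using hJ.neg_mem hx
  · simpa using hJ.mul_mem_left (ι r) hx
  · simpa using hJ.mul_mem_right (ι r) hx

/-- A closed ideal contained in `N_E` meets `A` trivially. -/
theorem inter_range_eq_zero_of_subset_null {C : Type*} [NonUnitalCStarAlgebra C]
    {ι : A →⋆ₙₐ[ℂ] B} {κ : A →⋆ₙₐ[ℂ] C} (hκ : Isometry κ)
    {E : B →ₗ[ℂ] C} (hres : ∀ a, E (ι a) = κ a) {J : Set B} (hJ : IsClosedTwoSidedIdeal J)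
    (hJN : J ⊆ {b : B | ∀ c : B, E (star (b * c) * (b * c)) = 0}) :
    J ∩ Set.range ι = {0} := by
  refine Set.Subset.antisymm ?_
    (Set.singleton_subset_iff.mpr ⟨hJ.zero_mem, 0, map_zero ι⟩)
  rintro _ ⟨haJ, a, rfl⟩
  have h := hJN haJ (ι (star a))
  rw [← map_mul, ← map_star, ← map_mul, hres, map_eq_zero_iff κ hκ.injective,
    CStarRing.star_mul_self_eq_zero_iff, CStarRing.mul_star_self_eq_zero_iff] at h
  simp [h]

end Inclusion

/-- Let `A ⊆ B` be an aperiodic C*-inclusion (`A` embedded via `ι`)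
with a supportive generalised expectation `E : B → Ã ⊇ A` (`A ⊆ Ã` via `κ`), and let
`N_E = {b : E((bc)*(bc)) = 0 for all c}`.  Then (1) `N_E` is the hidden ideal of the
inclusion: it is a closed two-sided ideal and a closed two-sided ideal `J` satisfies
`J ∩ A = {0}` iff `J ⊆ N_E`; and (2) `B` is simple iff `N_E = {0}` and `A` is
`B`-minimal. -/
theorem aperiodic_supportive_hidden_ideal_and_simplicity
    {A B C : Type*} [NonUnitalCStarAlgebra A] [PartialOrder A] [StarOrderedRing A]
    [NonUnitalCStarAlgebra B] [PartialOrder B] [StarOrderedRing B]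
    [NonUnitalCStarAlgebra C] [Nontrivial A]
    (ι : A →⋆ₙₐ[ℂ] B) (κ : A →⋆ₙₐ[ℂ] C) (hι : Isometry ι) (hκ : Isometry κ)
    (E : B →ₗ[ℂ] C)
    (hcp : CompletelyPositive E)
    (hcontr : ∀ b : B, ‖E b‖ ≤ ‖b‖)
    (hres : ∀ a : A, E (ι a) = κ a)
    (hap : ∀ x : B, ∀ D : Set A, IsHereditarySubalgebra D → ∀ ε : ℝ, 0 < ε →
      ∃ a ∈ D, 0 ≤ a ∧ ‖a‖ = 1 ∧ ∃ y : A, ‖ι a * x * ι a - ι y‖ < ε)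
    (hsupp : ∀ b : B, 0 ≤ b → E b ≠ 0 →
      ∃ δ : ℝ, 0 < δ ∧ ∃ D : Set A, IsHereditarySubalgebra D ∧
        ∀ x ∈ D, 0 ≤ x → ‖x‖ = 1 → δ ≤ ‖κ x * E b * κ x‖) :
    (IsClosedTwoSidedIdeal {b : B | ∀ c : B, E (star (b * c) * (b * c)) = 0} ∧
      ∀ J : Set B, IsClosedTwoSidedIdeal J →
        (J ∩ Set.range ⇑ι = {0} ↔
          J ⊆ {b : B | ∀ c : B, E (star (b * c) * (b * c)) = 0})) ∧
    ((∀ J : Set B, IsClosedTwoSidedIdeal J → J = {0} ∨ J = Set.univ) ↔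
      ({b : B | ∀ c : B, E (star (b * c) * (b * c)) = 0} = {0} ∧
        ∀ I : Set A, IsClosedTwoSidedIdeal I → I ≠ {0} →
          closure (Submodule.span ℂ
              {z : B | ∃ b₁ b₂ : B, ∃ i ∈ I, z = b₁ * ι i * b₂} : Set B) = Set.univ)) := by
  let _ : PartialOrder C := CStarAlgebra.spectralOrder C
  have : StarOrderedRing C := CStarAlgebra.spectralOrderedRing C
  have hN := hcp.isClosedTwoSidedIdeal_null hcontr
  have hsub (J : Set B) (hJ : IsClosedTwoSidedIdeal J) (hJA : J ∩ Set.range ⇑ι = {0}) :=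
    subset_null_of_inter_range_eq_zero hι hcp hcontr hres hap hsupp hJ hJA
  refine ⟨⟨hN, fun J hJ =>
    ⟨hsub J hJ, inter_range_eq_zero_of_subset_null hκ hres hJ⟩⟩, ?_, ?_⟩
  · intro hsimple
    refine ⟨(hsimple _ hN).resolve_right fun huniv => ?_, fun I hI hI0 => ?_⟩
    · have h0 := inter_range_eq_zero_of_subset_null hκ hres hN subset_rfl
      rw [huniv, Set.univ_inter] at h0
      obtain ⟨a, ha⟩ := exists_ne (0 : A)
      have : ι a ∈ ({0} : Set B) := h0 ▸ Set.mem_range_self a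
      exact ha (hι.injective (by simpa using this))
    · refine (hsimple _ (isClosedTwoSidedIdeal_closure_span ι I)).resolve_left fun h0 => hI0 ?_
      refine Set.Subset.antisymm (fun i hi => ?_) (Set.singleton_subset_iff.mpr hI.zero_mem)
      have hmem : ι (star i) * ι (i * star i) * ι i ∈ ({0} : Set B) :=
        h0 ▸ subset_closure
          (Submodule.subset_span ⟨_, _, _, hI.mul_mem_right (star i) hi, rfl⟩)
      have hz : star (star i * i) * (star i * i) = 0 := by
        refine hι.injective ?_
        simpa [mul_assoc] using hmem
      rwa [CStarRing.star_mul_self_eq_zero_iff, CStarRing.star_mul_self_eq_zero_iff] at hz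
  · rintro ⟨hN0, hmin⟩ J hJ
    by_cases hJA : J ∩ Set.range ⇑ι = {0}
    · left
      refine Set.Subset.antisymm ?_ (Set.singleton_subset_iff.mpr hJ.zero_mem)
      exact hN0 ▸ hsub J hJ hJA
    · right
      have hI : ι ⁻¹' J ≠ {0} := by
        intro h
        refine hJA (Set.Subset.antisymm ?_
          (Set.singleton_subset_iff.mpr ⟨hJ.zero_mem, 0, map_zero ι⟩))
        rintro _ ⟨haJ, a, rfl⟩
        have : a ∈ ({0} : Set A) := h ▸ haJ
        simpa using congrArg ι this
      rw [Set.eq_univ_iff_forall]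
      intro b
      have hb := (hmin _ (hJ.preimage hι.continuous) hI).symm ▸ Set.mem_univ b
      refine closure_minimal ?_ hJ.isClosed hb
      have hle : Submodule.span ℂ
          {z : B | ∃ b₁ b₂ : B, ∃ i ∈ ι ⁻¹' J, z = b₁ * ι i * b₂} ≤ hJ.toSubmodule := by
        rw [Submodule.span_le]
        rintro _ ⟨b₁, b₂, i, hi, rfl⟩
        exact hJ.mul_mem_right _ (hJ.mul_mem_left _ hi)
      exact hle
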